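/- arXiv:math/0510230 — 2 statements merged into one kernel-verified Lean document; each statement's English description precedes it below -/
import Mathlib

section
/- Let F be a free group on a nonempty finite set X and let Φ be a monoid automorphism of End(F) such that Φ(ν) = s ∘ ν ∘ s⁻¹ for a bijection s of F. Then s(g⁻¹) = (s(g))⁻¹ for all g ∈ F, and s(1) = 1. -/
/-- The endomorphism sending every generator to `g`. -/
def nuAux {X : Type*} (g : FreeGroup X) : Monoid.End (FreeGroup X) :=
  FreeGroup.lift (fun _ => g)

theorem nuAux_of {X : Type*} (g : FreeGroup X) (i : X) :
    (nuAux g) (FreeGroup.of i) = g := by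
  exact FreeGroup.lift_apply_of

theorem nuAux_mem {X : Type*} (g h : FreeGroup X) : ∃ k : ℤ, nuAux g h = g ^ k := by
  induction h using FreeGroup.induction_on with
  | C1 => exact ⟨0, by simp⟩
  | of i => exact ⟨1, by simp [nuAux_of]⟩
  | inv_of i _ => exact ⟨-1, by simp [nuAux_of]⟩
  | mul a b ha hb =>
    obtain ⟨k, hk⟩ := ha
    obtain ⟨l, hl⟩ := hb
    exact ⟨k + l, by rw [map_mul, hk, hl, zpow_add]⟩

theorem endAux_ext {X : Type*} {u v : Monoid.End (FreeGroup X)}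
    (h : ∀ i, u (FreeGroup.of i) = v (FreeGroup.of i)) : u = v :=
  FreeGroup.ext_hom u v h

theorem of_zpow_aux {X : Type*} (x : X) (k : ℤ)
    (h : (FreeGroup.of x) ^ k = FreeGroup.of x) : k = 1 := by
  have := congrArg (FreeGroup.lift (fun _ : X => Multiplicative.ofAdd (1 : ℤ))) h
  rw [map_zpow, FreeGroup.lift_apply_of, ← ofAdd_zsmul] at this
  simpa using this

theorem units_aux {X : Type*} (x : X) (u v : Monoid.End (FreeGroup X))
    (hu : nuAux (FreeGroup.of x) * u = u) (hu' : u * nuAux (FreeGroup.of x) = u)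
    (hv : nuAux (FreeGroup.of x) * v = v)
    (huv : u * v = nuAux (FreeGroup.of x)) :
    u = nuAux (FreeGroup.of x) ∨ u = nuAux (FreeGroup.of x)⁻¹ := by
  obtain ⟨k, hk⟩ := nuAux_mem (FreeGroup.of x) (u (FreeGroup.of x))
  obtain ⟨l, hl⟩ := nuAux_mem (FreeGroup.of x) (v (FreeGroup.of x))
  have hk' : u (FreeGroup.of x) = FreeGroup.of x ^ k :=
    (DFunLike.congr_fun hu (FreeGroup.of x)).symm.trans hk
  have hl' : v (FreeGroup.of x) = FreeGroup.of x ^ l :=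
    (DFunLike.congr_fun hv (FreeGroup.of x)).symm.trans hl
  have h1 : u (v (FreeGroup.of x)) = FreeGroup.of x :=
    (DFunLike.congr_fun huv (FreeGroup.of x)).trans (nuAux_of _ _)
  rw [hl', map_zpow, hk', ← zpow_mul] at h1
  have h2 := of_zpow_aux x _ h1
  have h3 : ∀ i, u (FreeGroup.of i) = FreeGroup.of x ^ k := by
    intro i
    have h4 : u (nuAux (FreeGroup.of x) (FreeGroup.of i)) = u (FreeGroup.of i) :=
      DFunLike.congr_fun hu' (FreeGroup.of i)
    rw [← h4, nuAux_of, hk']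
  rcases Int.eq_one_or_neg_one_of_mul_eq_one h2 with rfl | rfl
  · left; apply endAux_ext; intro i; rw [h3, nuAux_of, zpow_one]
  · right; apply endAux_ext; intro i; rw [h3, nuAux_of, zpow_neg_one]

/-- Let `F` be a free group on a nonempty finite set `X`, and let `Φ` be a monoid
automorphism of `End(F)` given by conjugation by a bijection `s` of `F`.  Then `s`
commutes with inversion and fixes the identity element. -/
theorem main_permutation_preserves_inv_and_one (X : Type*) [Fintype X] [Nonempty X]
    (s : FreeGroup X ≃ FreeGroup X)
    (Φ : Monoid.End (FreeGroup X) ≃* Monoid.End (FreeGroup X))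
    (hΦ : ∀ ν : Monoid.End (FreeGroup X),
      ((Φ ν : Monoid.End (FreeGroup X)) : FreeGroup X → FreeGroup X) =
        (s : FreeGroup X → FreeGroup X) ∘ ν ∘ (s.symm : FreeGroup X → FreeGroup X)) :
    (∀ g : FreeGroup X, s g⁻¹ = (s g)⁻¹) ∧ s 1 = 1 := by
  have hs : ∀ (ν : Monoid.End (FreeGroup X)) g, s (ν g) = Φ ν (s g) := by
    intro ν g
    rw [hΦ]; simp
  have hone : s 1 = 1 := by
    have h1 : nuAux (1 : FreeGroup X) (s.symm 1) = 1 := by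
      obtain ⟨k, hk⟩ := nuAux_mem (1 : FreeGroup X) (s.symm 1)
      rw [hk, one_zpow]
    have := hs (nuAux 1) (s.symm 1)
    rwa [h1, s.apply_symm_apply, map_one (Φ (nuAux 1))] at this
  refine ⟨?_, hone⟩
  obtain ⟨x⟩ := ‹Nonempty X›
  set e : Monoid.End (FreeGroup X) := nuAux (FreeGroup.of x) with he
  set ι : Monoid.End (FreeGroup X) := nuAux (FreeGroup.of x)⁻¹ with hι
  set f := Φ e with hf
  set j := Φ ι with hj
  have hee : e * e = e := endAux_ext fun i => by
    change e (e (FreeGroup.of i)) = _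
    simp [he, nuAux_of]
  have hff : ∀ g, f (f g) = f g := fun g => by
    have : f * f = f := by rw [hf, ← map_mul, hee]
    exact DFunLike.congr_fun this g
  have key : ∀ u v : Monoid.End (FreeGroup X), (∀ g, f (u g) = u g) → (∀ g, u (f g) = u g) →
      (∀ g, f (v g) = v g) → (∀ g, u (v g) = f g) → u = f ∨ u = j := by
    intro u v h1 h2 h3 h4
    have g1 : f * u = u := DFunLike.ext _ _ h1
    have g2 : u * f = u := DFunLike.ext _ _ h2
    have g3 : f * v = v := DFunLike.ext _ _ h3
    have g4 : u * v = f := DFunLike.ext _ _ h4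
    have := units_aux x (Φ.symm u) (Φ.symm v)
      (by apply Φ.injective; simpa using g1) (by apply Φ.injective; simpa using g2)
      (by apply Φ.injective; simpa using g3) (by apply Φ.injective; simpa using g4)
    rcases this with h | h
    · left; rw [hf, he, ← h]; simp
    · right; rw [hj, hι, ← h]; simp
  -- conjugation by an element of the image
  have hconj : ∀ c, f c = c → (∀ g, c * f g * c⁻¹ = f g) ∨ (∀ g, c * f g * c⁻¹ = j g) := by
    intro c hc
    let u : Monoid.End (FreeGroup X) := (MulAut.conj c).toMonoidHom.comp f
    let v : Monoid.End (FreeGroup X) := (MulAut.conj c⁻¹).toMonoidHom.comp f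
    have hu : ∀ g, u g = c * f g * c⁻¹ := fun g => rfl
    have hv : ∀ g, v g = c⁻¹ * f g * c := fun g => by
      change c⁻¹ * f g * c⁻¹⁻¹ = _
      rw [inv_inv]
    rcases key u v (fun g => by simp [hu, hc, hff]) (fun g => by simp [hu, hff])
      (fun g => by simp [hv, hc, hff]) (fun g => by simp [hu, hv, hc, hff]; group) with h | h
    · left; intro g; rw [← hu, h]
    · right; intro g; rw [← hu, h]
  have hcomm : ∀ a b, f a * f b = f b * f a := by
    intro a b
    rcases hconj (f a) (hff a) with h | h
    · exact mul_inv_eq_iff_eq_mul.1 (h b)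
    rcases hconj (f b) (hff b) with h' | h'
    · exact (mul_inv_eq_iff_eq_mul.1 (h' a)).symm
    · have := (h b).trans (h' b).symm
      rw [mul_inv_cancel_right] at this
      exact mul_inv_eq_iff_eq_mul.1 this
  let θ : Monoid.End (FreeGroup X) :=
    MonoidHom.mk' (fun g => (f g)⁻¹) (fun a b => by
      rw [map_mul, mul_inv_rev, ← mul_inv_rev, hcomm, mul_inv_rev] )
  have hθ : ∀ g, θ g = (f g)⁻¹ := fun g => rfl
  have hθj : θ = j := by
    rcases key θ θ (fun g => by simp [hθ, hff]) (fun g => by simp [hθ, hff])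
      (fun g => by simp [hθ, hff]) (fun g => by simp [hθ, hff]) with h | h
    · exfalso
      have h1 : ∀ g, f g = 1 := by
        intro g
        have h2 : (f g)⁻¹ = f g := by rw [← hθ, h]
        have h3 : f g ^ 2 = 1 := by rw [pow_two]; nth_rw 1 [← h2]; simp
        exact (pow_eq_one_iff_left (two_ne_zero)).1 h3
      have h4 := hs e (FreeGroup.of x)
      rw [← hf, h1, he, nuAux_of, ← hone] at h4
      exact FreeGroup.of_ne_one x (s.injective h4)
    · exact h
  have hx : s (FreeGroup.of x)⁻¹ = (s (FreeGroup.of x))⁻¹ := by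
    have h1 := hs ι (FreeGroup.of x)
    have h2 := hs e (FreeGroup.of x)
    rw [hι, nuAux_of, ← hι, ← hj, ← hθj, hθ] at h1
    rw [he, nuAux_of, ← he, ← hf] at h2
    rw [h1, ← h2]
  intro g
  have h1 := hs (nuAux g) (FreeGroup.of x)
  have h2 := hs (nuAux g) (FreeGroup.of x)⁻¹
  rw [nuAux_of] at h1
  rw [map_inv (nuAux g), nuAux_of, hx, map_inv (Φ (nuAux g)), ← h1] at h2
  exact h2
end

section
/- In a free group F on generators x, y, suppose w(x,y) is a word in x, y (an element of the free group on {x,y}) such that the binary operation a • b := w(a,b) satisfies a • 1 = a, 1 • b = b, and (a • b)⁻¹ = b⁻¹ • a⁻¹ for all a, b ∈ F. If moreover substituting the old product into w expressed via • recovers ab, then w(x,y) = xy or w(x,y) = yx. -/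
/-- The word for the `k`-th power of the second generator. -/
def bWord (k : ℤ) : List (Bool × Bool) := List.replicate k.natAbs (true, decide (0 ≤ k))

/-- Number of occurrences of the first generator in a word. -/
def aCount (l : List (Bool × Bool)) : ℕ := l.countP (fun p => !p.1)

theorem aCount_append (l₁ l₂ : List (Bool × Bool)) :
    aCount (l₁ ++ l₂) = aCount l₁ + aCount l₂ := by
  simp [aCount]

theorem aCount_invRev (l : List (Bool × Bool)) : aCount (FreeGroup.invRev l) = aCount l := by
  simp [aCount, FreeGroup.invRev, List.countP_map, Function.comp_def]

theorem aCount_bWord (k : ℤ) : aCount (bWord k) = 0 := by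
  simp [aCount, bWord, List.countP_replicate]

theorem mk_bWord (k : ℤ) : FreeGroup.mk (bWord k) = FreeGroup.of true ^ k := by
  have key : ∀ (n : ℕ) (e : Bool), FreeGroup.mk (List.replicate n (true, e)) =
      (FreeGroup.mk [(true, e)]) ^ n := by
    intro n e
    induction n with
    | zero => rfl
    | succ n ih => rw [List.replicate_succ, pow_succ', ← ih, FreeGroup.mul_mk]; rfl
  rw [bWord, key]
  rcases Int.natAbs_eq k with h | h
  · have h0 : 0 ≤ k := by omega
    rw [decide_eq_true h0]
    conv_rhs => rw [h]
    rw [zpow_natCast]; rfl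
  · by_cases h0 : k = 0
    · subst h0; rfl
    have h0 : ¬ (0 ≤ k) := by omega
    rw [decide_eq_false h0]
    conv_rhs => rw [h]
    rw [zpow_neg, zpow_natCast, ← inv_pow]; rfl

theorem bWord_mem {k : ℤ} {p : Bool × Bool} (h : p ∈ bWord k) : p.1 = true := by
  rw [bWord, List.mem_replicate] at h
  rw [h.2]

theorem bWord_ne_nil {k : ℤ} (h : k ≠ 0) : bWord k ≠ [] := by
  simpa [bWord] using h

theorem bWord_red (k : ℤ) : FreeGroup.IsReduced (bWord k) := by
  unfold FreeGroup.IsReduced bWord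
  exact List.isChain_replicate_of_rel _ (by simp)

theorem red_left {l : List (Bool × Bool)} (hl : FreeGroup.IsReduced l)
    (h : ∀ p ∈ l.getLast?, p.1 = false) (k : ℤ) : FreeGroup.IsReduced (l ++ bWord k) := by
  unfold FreeGroup.IsReduced
  rw [List.isChain_append]
  refine ⟨hl, bWord_red k, fun x hx y hy hxy => ?_⟩
  have h1 := h x hx
  have h2 := bWord_mem (List.mem_of_mem_head? hy)
  rw [h1, h2] at hxy
  simp at hxy

theorem red_right {l : List (Bool × Bool)} (hl : FreeGroup.IsReduced l)
    (h : ∀ p ∈ l.head?, p.1 = false) (k : ℤ) : FreeGroup.IsReduced (bWord k ++ l) := by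
  unfold FreeGroup.IsReduced
  rw [List.isChain_append]
  refine ⟨bWord_red k, hl, fun x hx y hy hxy => ?_⟩
  have h1 := h y hy
  have h2 := bWord_mem (List.mem_of_mem_getLast? hx)
  rw [h1, h2] at hxy
  simp at hxy

theorem invRev_red {l : List (Bool × Bool)} (hl : FreeGroup.IsReduced l) :
    FreeGroup.IsReduced (FreeGroup.invRev l) := by
  rw [FreeGroup.isReduced_iff_reduce_eq] at *
  rw [FreeGroup.reduce_invRev, hl]

theorem invRev_head {l : List (Bool × Bool)} (h : ∀ p ∈ l.getLast?, p.1 = false) :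
    ∀ p ∈ (FreeGroup.invRev l).head?, p.1 = false := by
  intro p hp
  simp only [FreeGroup.invRev, List.head?_reverse, List.getLast?_map, Option.mem_def,
    Option.map_eq_some_iff] at hp
  obtain ⟨q, hq, rfl⟩ := hp
  exact h q hq

theorem invRev_last {l : List (Bool × Bool)} (h : ∀ p ∈ l.head?, p.1 = false) :
    ∀ p ∈ (FreeGroup.invRev l).getLast?, p.1 = false := by
  intro p hp
  simp only [FreeGroup.invRev, List.getLast?_reverse, List.head?_map, Option.mem_def,
    Option.map_eq_some_iff] at hp
  obtain ⟨q, hq, rfl⟩ := hp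
  exact h q hq

/-- `c` or its formal inverse. -/
def sgnWord (c : List (Bool × Bool)) (e : Bool) : List (Bool × Bool) :=
  bif e then c else FreeGroup.invRev c

theorem aCount_sgnWord (c : List (Bool × Bool)) (e : Bool) :
    aCount (sgnWord c e) = aCount c := by
  cases e <;> simp [sgnWord, aCount_invRev]

theorem core_invariant (G c : List (Bool × Bool)) (s t j : ℤ) (hj : j ≠ 0)
    (hc : c ≠ [])
    (hred : FreeGroup.IsReduced (G ++ c ++ FreeGroup.invRev G))
    (hhead : ∀ p ∈ (G ++ c).head?, p.1 = false)
    (hlast : ∀ p ∈ (c ++ FreeGroup.invRev G).getLast?, p.1 = false)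
    (hcc : j ∣ s + t → FreeGroup.IsReduced (c ++ c))
    (f : Bool → FreeGroup Bool)
    (hfx : f false = FreeGroup.of true ^ s * FreeGroup.mk (G ++ c ++ FreeGroup.invRev G) *
      FreeGroup.of true ^ t)
    (hfy : f true = FreeGroup.of true ^ j)
    (W : List (Bool × Bool)) (hW : FreeGroup.IsReduced W) :
    (∃ m : ℤ, FreeGroup.lift f (FreeGroup.mk W) = FreeGroup.of true ^ (j * m) ∧ aCount W = 0) ∨
    (∃ (m : ℤ) (e : Bool) (r : List (Bool × Bool)),
      FreeGroup.lift f (FreeGroup.mk W) = FreeGroup.of true ^ (j * m + bif e then s else -t) *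
        FreeGroup.mk (G ++ sgnWord c e ++ r) ∧
      FreeGroup.IsReduced (G ++ sgnWord c e ++ r) ∧
      aCount W * aCount c + aCount G ≤ aCount r + aCount c ∧
      (0 < m → W.head? = some (true, true)) ∧ (m < 0 → W.head? = some (true, false)) ∧
      (m = 0 → W.head? = some (false, e))) := by
  have hc' : ∀ e, sgnWord c e ≠ [] := by
    intro e
    cases e
    · intro h
      apply hc
      have := congrArg FreeGroup.invRev h
      simpa [sgnWord] using this
    · exact hc
  have hred' : ∀ e, FreeGroup.IsReduced (G ++ sgnWord c e ++ FreeGroup.invRev G) := by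
    intro e
    cases e
    · have := invRev_red hred
      simpa [sgnWord, FreeGroup.invRev_append] using this
    · exact hred
  have hhead' : ∀ e, ∀ p ∈ (G ++ sgnWord c e).head?, p.1 = false := by
    intro e
    cases e
    · have := invRev_head hlast
      simpa [sgnWord, FreeGroup.invRev_append] using this
    · exact hhead
  have hlast' : ∀ e, ∀ p ∈ (sgnWord c e ++ FreeGroup.invRev G).getLast?, p.1 = false := by
    intro e
    cases e
    · have := invRev_last hhead
      simpa [sgnWord, FreeGroup.invRev_append] using this
    · exact hlast
  have hhead'' : ∀ e r, ∀ p ∈ (G ++ sgnWord c e ++ r).head?, p.1 = false := by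
    intro e r p hp
    apply hhead' e p
    rwa [List.head?_append_of_ne_nil] at hp
    simp [hc' e]
  have hlast'' : ∀ e, ∀ p ∈ (G ++ sgnWord c e ++ FreeGroup.invRev G).getLast?, p.1 = false := by
    intro e p hp
    apply hlast' e p
    rwa [List.append_assoc, List.getLast?_append_of_ne_nil] at hp
    simp [hc' e]
  have hcc' : ∀ e, j ∣ s + t → FreeGroup.IsReduced (sgnWord c e ++ sgnWord c e) := by
    intro e h
    cases e
    · have := invRev_red (hcc h)
      simpa [sgnWord, FreeGroup.invRev_append] using this
    · exact hcc h
  have hmkG : ∀ l, FreeGroup.mk (FreeGroup.invRev l) = (FreeGroup.mk l : FreeGroup Bool)⁻¹ :=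
    fun l => (FreeGroup.inv_mk).symm
  have hx : ∀ d : Bool, FreeGroup.lift f (FreeGroup.mk [(false, d)]) =
      FreeGroup.of true ^ (bif d then s else -t) *
      FreeGroup.mk (G ++ sgnWord c d ++ FreeGroup.invRev G) *
      FreeGroup.of true ^ (bif d then t else -s) := by
    intro d
    cases d
    · have h : FreeGroup.lift f (FreeGroup.mk [(false, false)]) = (f false)⁻¹ := by
        simp [FreeGroup.lift_mk]
      rw [h, hfx]
      simp only [sgnWord, cond_false, ← FreeGroup.mul_mk, hmkG, mul_inv_rev, inv_inv, zpow_neg,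
        mul_assoc]
    · simp [FreeGroup.lift_mk, hfx, sgnWord]
  have hy : ∀ d : Bool, FreeGroup.lift f (FreeGroup.mk [(true, d)]) =
      FreeGroup.of true ^ (j * bif d then 1 else -1) := by
    intro d
    cases d <;> simp [FreeGroup.lift_mk, hfy]
  induction W with
  | nil => left; exact ⟨0, by simp [← FreeGroup.one_eq_mk], rfl⟩
  | cons q W ih =>
    have hW' : FreeGroup.IsReduced W := hW.infix ⟨[q], [], by simp⟩
    have hq : ∀ q' ∈ W.head?, q.1 = q'.1 → q.2 = q'.2 := by
      unfold FreeGroup.IsReduced at hW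
      rw [List.isChain_cons] at hW
      exact hW.1
    have hsplit : FreeGroup.lift f (FreeGroup.mk (q :: W)) =
        FreeGroup.lift f (FreeGroup.mk [q]) * FreeGroup.lift f (FreeGroup.mk W) := by
      rw [← map_mul, FreeGroup.mul_mk]; rfl
    have hcnt : aCount (q :: W) = aCount [q] + aCount W := aCount_append [q] W
    obtain ⟨g, d⟩ := q
    rw [hsplit, hcnt]
    rcases ih hW' with ⟨m, hv, h0⟩ | ⟨m, e, r, hv, hr, hle, hp, hn, hz⟩
    · cases g
      · right
        refine ⟨0, d, FreeGroup.invRev G ++ bWord ((bif d then t else -s) + j * m), ?_, ?_, ?_,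
          by simp, by simp, by simp⟩
        · rw [hx, hv]
          simp only [← FreeGroup.mul_mk, mk_bWord, zpow_add, mul_assoc, mul_zero, zpow_zero,
            one_mul]
        · rw [← List.append_assoc]
          exact red_left (hred' d) (hlast'' d) _
        · rw [aCount_append, aCount_bWord, aCount_invRev, h0]
          simp [aCount]
          omega
      · left
        refine ⟨(bif d then 1 else -1) + m, ?_, ?_⟩
        · rw [hy, hv, mul_add, zpow_add]
        · rw [h0]; simp [aCount]
    · right
      cases g
      · have h1 : aCount [((false : Bool), d)] = 1 := rfl
        by_cases hk : (bif d then t else -s) + j * m + (bif e then s else -t) = 0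
        · have hde : d = e := by
            by_contra hne
            have hm : m ≠ 0 := by
              intro hm
              exact hne (hq _ (hz hm) rfl)
            apply mul_ne_zero hj hm
            cases d <;> cases e <;> simp at hk hne ⊢ <;> omega
          subst hde
          have hdvd : j ∣ s + t := by
            cases d <;> simp at hk
            · exact ⟨m, by linarith⟩
            · exact ⟨-m, by linarith⟩
          refine ⟨0, d, sgnWord c d ++ r, ?_, ?_, ?_, by simp, by simp, by simp⟩
          · rw [hx, hv]
            have : (FreeGroup.of true : FreeGroup Bool) ^ (bif d then t else -s) *
                FreeGroup.of true ^ (j * m + bif d then s else -t) = 1 := by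
              rw [← zpow_add, ← add_assoc, hk, zpow_zero]
            rw [mul_assoc, ← mul_assoc (FreeGroup.of true ^ (bif d then t else -s)), this]
            simp only [← FreeGroup.mul_mk, hmkG, mul_zero, zero_add, one_mul, mul_assoc,
              inv_mul_cancel_left]
          · rw [← List.append_assoc]
            have a1 : FreeGroup.IsReduced (G ++ sgnWord c d) :=
              (hred' d).infix ⟨[], _, by simp; rfl⟩
            have a2 : FreeGroup.IsReduced (sgnWord c d ++ r) :=
              hr.infix ⟨G, [], by simp⟩
            refine FreeGroup.IsReduced.append_overlap ?_ a2 (hc' d)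
            exact FreeGroup.IsReduced.append_overlap a1 (hcc' d hdvd) (hc' d)
          · rw [aCount_append, aCount_sgnWord, h1]
            nlinarith
        · refine ⟨0, d, FreeGroup.invRev G ++ bWord ((bif d then t else -s) + j * m +
            (bif e then s else -t)) ++ (G ++ sgnWord c e ++ r), ?_, ?_, ?_,
            by simp, by simp, by simp⟩
          · rw [hx, hv]
            simp only [← FreeGroup.mul_mk, mk_bWord, zpow_add, mul_assoc, mul_zero, zpow_zero,
              one_mul]
          · have b1 := red_left (hred' d) (hlast'' d)
              ((bif d then t else -s) + j * m + (bif e then s else -t))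
            have b2 := red_right hr (hhead'' e r)
              ((bif d then t else -s) + j * m + (bif e then s else -t))
            have := FreeGroup.IsReduced.append_overlap b1 b2 (bWord_ne_nil hk)
            simpa [List.append_assoc] using this
          · simp only [aCount_append, aCount_bWord, aCount_invRev, aCount_sgnWord, h1]
            nlinarith
      · have h1 : aCount [((true : Bool), d)] = 0 := rfl
        refine ⟨(bif d then 1 else -1) + m, e, r, ?_, hr, ?_, ?_, ?_, ?_⟩
        · rw [hy, hv, ← mul_assoc, ← zpow_add, mul_add, add_assoc]
        · rw [h1, zero_add]; exact hle
        all_goals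
          intro hm
          cases d
          · have : ¬ 0 < m := fun h => by simpa using hq _ (hp h) rfl
            simp at hm ⊢
            try omega
          · have : ¬ m < 0 := fun h => by simpa using hq _ (hn h) rfl
            simp at hm ⊢
            try omega

theorem mk_single_true (d : Bool) : (FreeGroup.mk [(true, d)] : FreeGroup Bool) =
    FreeGroup.of true ^ (bif d then (1 : ℤ) else -1) := by
  cases d
  · simp; rfl
  · simp; rfl

theorem decompose (n : ℕ) : ∀ l : List (Bool × Bool), l.length = n → FreeGroup.IsReduced l →
    (∀ k : ℤ, FreeGroup.mk l ≠ FreeGroup.of true ^ k) →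
    ∃ (s t : ℤ) (L : List (Bool × Bool)), FreeGroup.IsReduced L ∧ L ≠ [] ∧
      (∀ p ∈ L.head?, p.1 = false) ∧ (∀ p ∈ L.getLast?, p.1 = false) ∧
      FreeGroup.mk l = FreeGroup.of true ^ s * FreeGroup.mk L * FreeGroup.of true ^ t := by
  induction n with
  | zero =>
    intro l hl _ hk
    rw [List.length_eq_zero_iff] at hl
    exact absurd (by rw [hl, zpow_zero, FreeGroup.one_eq_mk]) (hk 0)
  | succ n ih =>
    intro l hl hr hk
    by_cases hh : ∀ p ∈ l.head?, p.1 = false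
    · by_cases hla : ∀ p ∈ l.getLast?, p.1 = false
      · exact ⟨0, 0, l, hr, by rintro rfl; simp at hl, hh, hla, by simp⟩
      · push Not at hla
        obtain ⟨⟨g, d⟩, hp, hg⟩ := hla
        simp at hg
        subst hg
        obtain ⟨l', rfl⟩ := List.getLast?_eq_some_iff.mp hp
        rw [← FreeGroup.mul_mk, mk_single_true] at hk ⊢
        obtain ⟨s, t, L, h1, h2, h3, h4, h5⟩ := ih l' (by simpa using hl)
          (hr.infix ⟨[], _, rfl⟩) (fun k h => hk (k + bif d then 1 else -1)
            (by rw [h, zpow_add]))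
        exact ⟨s, t + (bif d then 1 else -1), L, h1, h2, h3, h4,
          by rw [h5, zpow_add]; simp only [mul_assoc]⟩
    · push Not at hh
      obtain ⟨⟨g, d⟩, hp, hg⟩ := hh
      simp at hg
      subst hg
      obtain ⟨l', rfl⟩ := List.head?_eq_some_iff.mp hp
      have e : (FreeGroup.mk ((true, d) :: l') : FreeGroup Bool) =
          FreeGroup.of true ^ (bif d then (1 : ℤ) else -1) * FreeGroup.mk l' := by
        rw [← mk_single_true, FreeGroup.mul_mk]; rfl
      rw [e] at hk ⊢
      obtain ⟨s, t, L, h1, h2, h3, h4, h5⟩ := ih l' (by simpa using hl)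
        (hr.infix ⟨[(true, d)], [], by simp⟩) (fun k h => hk ((bif d then 1 else -1) + k)
          (by rw [h, zpow_add]))
      exact ⟨(bif d then 1 else -1) + s, t, L, h1, h2, h3, h4,
        by rw [h5, zpow_add]; simp only [mul_assoc]⟩

theorem aCount_toWord_le (l : List (Bool × Bool)) (hl : FreeGroup.IsReduced l)
    (l' : List (Bool × Bool)) (h : FreeGroup.mk l = FreeGroup.mk l') :
    aCount l ≤ aCount l' := by
  have h1 := FreeGroup.reduce.sound h
  rw [hl.reduce_eq] at h1
  rw [h1]
  exact (FreeGroup.Red.sublist FreeGroup.reduce.red).countP_le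

theorem aCount_pos {l : List (Bool × Bool)} (hl : l ≠ [])
    (h : ∀ p ∈ l.head?, p.1 = false) : 1 ≤ aCount l := by
  cases l with
  | nil => exact absurd rfl hl
  | cons a l =>
    have := h a (by simp)
    simp [aCount, this]

theorem main_count (w u : FreeGroup Bool) (j : ℤ) (hj : j ≠ 0)
    (hu : ∀ k : ℤ, u ≠ FreeGroup.of true ^ k) (z : List (Bool × Bool)) (hz : aCount z ≤ 1)
    (h : FreeGroup.lift (fun t : Bool => bif t then FreeGroup.of true ^ j else u) w =
      FreeGroup.mk z) : aCount w.toWord ≤ 1 := by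
  obtain ⟨s, t, L, hL, hL0, hLh, hLl, hLe⟩ := decompose _ u.toWord rfl FreeGroup.isReduced_toWord
    (by rw [FreeGroup.mk_toWord]; exact hu)
  rw [FreeGroup.mk_toWord] at hLe
  obtain ⟨G, c, hGc, hcc⟩ : ∃ G c : List (Bool × Bool), G ++ c ++ FreeGroup.invRev G = L ∧
      (j ∣ s + t → FreeGroup.IsReduced (c ++ c)) := by
    by_cases hd : j ∣ s + t
    · refine ⟨_, _, FreeGroup.reduceCyclically.conj_conjugator_reduceCyclically L, fun _ => ?_⟩
      have := ((FreeGroup.reduceCyclically.isCyclicallyReduced hL).flatten_replicate 2).isReduced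
      simpa using this
    · exact ⟨[], L, by simp, fun h => absurd h hd⟩
  have hc : c ≠ [] := by
    rintro rfl
    have h1 : FreeGroup.mk L = FreeGroup.mk [] := by
      rw [← hGc]
      simp only [← FreeGroup.mul_mk, ← FreeGroup.inv_mk, ← FreeGroup.one_eq_mk, mul_one,
        mul_inv_cancel]
    have h2 := FreeGroup.reduce.sound h1
    rw [hL.reduce_eq] at h2
    exact hL0 (by simpa using h2)
  have hhead : ∀ p ∈ (G ++ c).head?, p.1 = false := by
    intro p hp
    apply hLh
    rw [← hGc, List.head?_append_of_ne_nil]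
    · exact hp
    · simp [hc]
  have hlast : ∀ p ∈ (c ++ FreeGroup.invRev G).getLast?, p.1 = false := by
    intro p hp
    apply hLl
    rw [← hGc, List.append_assoc, List.getLast?_append_of_ne_nil]
    · exact hp
    · simp [hc]
  have hpos : 1 ≤ aCount (G ++ c) := aCount_pos (by simp [hc]) hhead
  have key := core_invariant G c s t j hj hc (by rw [hGc]; exact hL) hhead hlast hcc
    (fun t : Bool => bif t then FreeGroup.of true ^ j else u) (by simp [hGc, hLe]) (by simp)
    w.toWord FreeGroup.isReduced_toWord
  rcases key with ⟨m, _, h0⟩ | ⟨m, e, r, hv, hr, hle, -⟩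
  · omega
  · rw [FreeGroup.mk_toWord, h, ← inv_mul_eq_iff_eq_mul, ← zpow_neg, ← mk_bWord,
      FreeGroup.mul_mk] at hv
    have h1 := aCount_toWord_le _ hr _ hv.symm
    rw [aCount_append, aCount_append, aCount_append, aCount_bWord, aCount_sgnWord] at h1
    by_cases hG : G = []
    · subst hG
      rw [List.nil_append] at hpos
      by_contra hcon
      have : 2 * aCount c ≤ aCount w.toWord * aCount c := Nat.mul_le_mul_right _ (by omega)
      have hn : aCount [] = 0 := rfl
      rw [hn] at h1 hle
      omega
    · have hG1 : 1 ≤ aCount G := aCount_pos hG (by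
        intro p hp
        apply hhead
        rw [List.head?_append_of_ne_nil]
        · exact hp
        · exact hG)
      have : aCount w.toWord * aCount c = 0 ∨ aCount c ≤ aCount w.toWord * aCount c := by
        rcases Nat.eq_zero_or_pos (aCount w.toWord) with h | h
        · left; rw [h, zero_mul]
        · right; exact Nat.le_mul_of_pos_left _ h
      rcases this with h' | h'
      · rcases Nat.mul_eq_zero.mp h' with h'' | h'' <;> omega
      · omega

theorem mk_of_count_zero (l : List (Bool × Bool)) (h : aCount l = 0) :
    ∃ p : ℤ, FreeGroup.mk l = FreeGroup.of true ^ p := by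
  induction l with
  | nil => exact ⟨0, by rw [zpow_zero, FreeGroup.one_eq_mk]⟩
  | cons q l ih =>
    obtain ⟨g, d⟩ := q
    cases g
    · simp [aCount] at h
    · obtain ⟨p, hp⟩ := ih (by simpa [aCount] using h)
      refine ⟨(bif d then (1 : ℤ) else -1) + p, ?_⟩
      rw [zpow_add, ← hp, ← mk_single_true, FreeGroup.mul_mk]; rfl

theorem mk_of_count_one (l : List (Bool × Bool)) (h : aCount l ≤ 1) :
    ∃ p e q : ℤ, FreeGroup.mk l =
      FreeGroup.of true ^ p * FreeGroup.of false ^ e * FreeGroup.of true ^ q := by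
  induction l with
  | nil => exact ⟨0, 0, 0, by simp [FreeGroup.one_eq_mk]⟩
  | cons q l ih =>
    obtain ⟨g, d⟩ := q
    cases g
    · obtain ⟨p, hp⟩ := mk_of_count_zero l (by simpa [aCount] using h)
      refine ⟨0, bif d then (1 : ℤ) else -1, p, ?_⟩
      have e : (FreeGroup.mk [(false, d)] : FreeGroup Bool) =
          FreeGroup.of false ^ (bif d then (1 : ℤ) else -1) := by
        cases d
        · simp; rfl
        · simp; rfl
      rw [← hp, ← e, zpow_zero, one_mul, FreeGroup.mul_mk]; rfl
    · obtain ⟨p, e, q, hp⟩ := ih (by simpa [aCount] using h)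
      refine ⟨(bif d then (1 : ℤ) else -1) + p, e, q, ?_⟩
      rw [zpow_add, mul_assoc, mul_assoc, ← mul_assoc (FreeGroup.of true ^ p), ← hp,
        ← mk_single_true, FreeGroup.mul_mk]; rfl

theorem fold_last {M : Type*} [Group M] (op : M → M → M) (h1 : ∀ a, op a 1 = a) (a b : M)
    (l : List M) (hl : ∀ g ∈ l, (∃ n : ℤ, g = a ^ n) ∨ ∃ n : ℤ, g = b ^ n)
    (z : M) (hz : z ≠ 1) (h : l.foldl op 1 = z) :
    ∃ (u : M) (n : ℤ), n ≠ 0 ∧ (op u (a ^ n) = z ∨ op u (b ^ n) = z) := by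
  induction l using List.reverseRecOn with
  | nil => exact absurd h.symm hz
  | append_singleton l g ih =>
    rw [List.foldl_append] at h
    simp only [List.foldl_cons, List.foldl_nil] at h
    by_cases hg : g = 1
    · rw [hg, h1] at h
      exact ih (fun g hg => hl g (by simp [hg])) h
    · rcases hl g (by simp) with ⟨n, rfl⟩ | ⟨n, rfl⟩
      · exact ⟨_, n, by rintro rfl; simp at hg, Or.inl h⟩
      · exact ⟨_, n, by rintro rfl; simp at hg, Or.inr h⟩

theorem palindrome (p q : ℤ) (hpq : p + q = 1)
    (h : ((FreeGroup.of true ^ p * FreeGroup.of false * FreeGroup.of true ^ q :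
      FreeGroup Bool))⁻¹ = (FreeGroup.of false)⁻¹ ^ p * (FreeGroup.of true)⁻¹ *
        (FreeGroup.of false)⁻¹ ^ q) : p * q = 0 := by
  let X : Matrix.SpecialLinearGroup (Fin 2) ℤ := ModularGroup.T
  let Y : Matrix.SpecialLinearGroup (Fin 2) ℤ :=
    ModularGroup.S * ModularGroup.T⁻¹ * ModularGroup.S⁻¹
  have hX : ∀ n : ℤ, ((X ^ n : Matrix.SpecialLinearGroup (Fin 2) ℤ) : Matrix (Fin 2) (Fin 2) ℤ) =
      !![1, n; 0, 1] := fun n => ModularGroup.coe_T_zpow n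
  have hY : ∀ n : ℤ, ((Y ^ n : Matrix.SpecialLinearGroup (Fin 2) ℤ) : Matrix (Fin 2) (Fin 2) ℤ) =
      !![1, 0; n, 1] := by
    intro n
    have : Y ^ n = ModularGroup.S * ModularGroup.T ^ (-n) * ModularGroup.S⁻¹ := by
      simp only [Y, conj_zpow, inv_zpow, zpow_neg]
    rw [this]
    rw [Matrix.SpecialLinearGroup.coe_mul, Matrix.SpecialLinearGroup.coe_mul,
      ModularGroup.coe_T_zpow, Matrix.SpecialLinearGroup.coe_inv, ModularGroup.coe_S]
    simp [Matrix.adjugate_fin_two]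
  have h' := congrArg (FreeGroup.lift (fun t : Bool => bif t then Y else X)) h
  simp only [mul_inv_rev, map_mul, map_inv, map_zpow, FreeGroup.lift_apply_of, cond_true,
    cond_false, ← zpow_neg, inv_zpow] at h'
  have e1 : X⁻¹ = X ^ (-1 : ℤ) := by simp
  have e2 : Y⁻¹ = Y ^ (-1 : ℤ) := by simp
  rw [e1, e2] at h'
  have h2 := congrArg (fun A : Matrix.SpecialLinearGroup (Fin 2) ℤ =>
    (A : Matrix (Fin 2) (Fin 2) ℤ) 0 1) h'
  simp only [Matrix.SpecialLinearGroup.coe_mul, hX, hY] at h2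
  simp [Matrix.mul_apply, Fin.sum_univ_two] at h2
  have : q = 1 - p := by linarith
  subst this
  linarith

theorem derived_group_operation_is_mul_or_swap_mul
    (w : FreeGroup Bool) (k : ℕ) (i j : Fin k → ℤ)
    (hw : w = (List.ofFn fun m : Fin k =>
      (FreeGroup.of false) ^ (i m) * (FreeGroup.of true) ^ (j m)).prod)
    (op : FreeGroup Bool → FreeGroup Bool → FreeGroup Bool)
    (hop : ∀ a b : FreeGroup Bool,
      op a b = FreeGroup.lift (fun t : Bool => bif t then b else a) w)
    (h1 : ∀ a : FreeGroup Bool, op a 1 = a)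
    (h2 : ∀ b : FreeGroup Bool, op 1 b = b)
    (hinv : ∀ a b : FreeGroup Bool, (op a b)⁻¹ = op b⁻¹ a⁻¹)
    (hsub : ∀ a b : FreeGroup Bool,
      ((List.ofFn fun m : Fin k => [a ^ (i m), b ^ (j m)]).flatten).foldl op 1 = a * b) :
    w = FreeGroup.of false * FreeGroup.of true ∨
      w = FreeGroup.of true * FreeGroup.of false := by
  -- homomorphisms commute with `op`
  have hmap : ∀ (φ : FreeGroup Bool →* FreeGroup Bool) (a b : FreeGroup Bool),
      φ (op a b) = op (φ a) (φ b) := by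
    intro φ a b
    rw [hop, hop, ← MonoidHom.comp_apply]
    congr 1
    ext t
    cases t <;> simp
  have hinj : ∀ (g : Bool) (m n : ℤ),
      (FreeGroup.of g : FreeGroup Bool) ^ m = FreeGroup.of g ^ n → m = n := by
    intro g m n h
    have := congrArg (FreeGroup.lift (fun _ : Bool => Multiplicative.ofAdd (1 : ℤ))) h
    simpa [← ofAdd_zsmul] using this
  -- the count of `x` letters in `w` is at most one
  have hcount : aCount w.toWord ≤ 1 := by
    have hxy : (FreeGroup.of false * FreeGroup.of true : FreeGroup Bool) ≠ 1 := by
      intro h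
      have := congrArg (FreeGroup.lift
        (fun t : Bool => bif t then (1 : FreeGroup Bool) else FreeGroup.of false)) h
      simp at this
    -- reduce to the case where the last factor is a power of `y`
    have fin : ∀ (u z : FreeGroup Bool) (n : ℤ), n ≠ 0 → op u (FreeGroup.of true ^ n) = z →
        (z = FreeGroup.of false * FreeGroup.of true ∨
          z = FreeGroup.of true * FreeGroup.of false) → aCount w.toWord ≤ 1 := by
      intro u z n hn hu hz
      have hu' : ∀ k : ℤ, u ≠ FreeGroup.of true ^ k := by
        rintro k rfl
        have := congrArg (FreeGroup.lift
          (fun t : Bool => bif t then (1 : FreeGroup Bool) else FreeGroup.of false)) hu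
        rw [hmap] at this
        rcases hz with rfl | rfl <;> simp [h1] at this
      rw [hop] at hu
      rcases hz with rfl | rfl
      · exact main_count w u n hn hu' [(false, true), (true, true)] (by simp [aCount]) hu
      · exact main_count w u n hn hu' [(true, true), (false, true)] (by simp [aCount]) hu
    obtain ⟨u, n, hn, h | h⟩ := fold_last op h1 (FreeGroup.of false) (FreeGroup.of true) _
      (by
        intro g hg
        simp only [List.mem_flatten, List.mem_ofFn] at hg
        obtain ⟨l, ⟨m, rfl⟩, hg⟩ := hg
        simp only [List.mem_cons, List.not_mem_nil, or_false] at hg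
        rcases hg with rfl | rfl
        · exact Or.inl ⟨_, rfl⟩
        · exact Or.inr ⟨_, rfl⟩) _ hxy (hsub (FreeGroup.of false) (FreeGroup.of true))
    · have := congrArg (FreeGroup.lift
        (fun t : Bool => (FreeGroup.of (!t) : FreeGroup Bool))) h
      rw [hmap] at this
      simp only [map_zpow, map_mul, FreeGroup.lift_apply_of, Bool.not_false, Bool.not_true] at this
      exact fin _ _ n hn this (Or.inr rfl)
    · exact fin u _ n hn h (Or.inl rfl)
  obtain ⟨p, e, q, hwe⟩ := mk_of_count_one _ hcount
  rw [FreeGroup.mk_toWord] at hwe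
  have hop' : ∀ a b : FreeGroup Bool, op a b = b ^ p * a ^ e * b ^ q := by
    intro a b
    rw [hop, hwe]
    simp
  have he : e = 1 := by
    have := h1 (FreeGroup.of false)
    rw [hop'] at this
    apply hinj false
    simpa using this
  subst he
  have hpq : p + q = 1 := by
    have := h2 (FreeGroup.of true)
    rw [hop'] at this
    apply hinj true
    simpa [zpow_add] using this
  have h0 := hinv (FreeGroup.of false) (FreeGroup.of true)
  rw [hop', hop', zpow_one, zpow_one] at h0
  rcases mul_eq_zero.mp (palindrome p q hpq h0) with rfl | rfl
  · left
    have : q = 1 := by omega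
    subst this
    simpa using hwe
  · right
    have : p = 1 := by omega
    subst this
    simpa using hwe
end
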